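/- Let ν be a place of the global function field K and let M be a Zariski closed subset of K_ν^m. Then for any compact subset A of M, any ε > 0 and integers d, D there exists a compact subset B of M such that the following holds: given any neighbourhood 𝒬₀ of B in K_ν^m, there exists a neighbourhood 𝒬 of A in K_ν^m such that for any unipotent subgroup U of GL_m(K_ν) with a polynomial diffeomorphism 𝐮 : K_ν^d → U of degree ≤ D onto U satisfying 𝐮(𝟎) = e, any a ∈ K_ν^m ∖ 𝒬₀, and any neighbourhood B(r) ⊂ K_ν^d of the origin, one has |{𝐭 ∈ B(r) : 𝐮(𝐭)a ∈ 𝒬}| ≤ ε |{𝐭 ∈ B(r) : 𝐮(𝐭)a ∈ 𝒬₀}|. -/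

import Mathlib

/-!
Linearization estimate near a Zariski closed set (Einsiedler–Mohammadi,
Proposition 5.3, after Tomanov and Dani–Margulis Prop. 4.2).  `k = K_ν` is a
nonarchimedean local field, `M ⊆ k^m` a Zariski closed subset.  For every
compact `A ⊆ M`, `ε > 0` and integers `d, D` there is a compact `B ⊆ M` such
that: for every neighbourhood `𝒬₀` of `B` there is a neighbourhood `𝒬` of `A`
such that for every unipotent subgroup `U ⊆ GL_m(k)` parametrized by a
polynomial map `𝐮 : k^d → U` of degree `≤ D` with `𝐮(0) = e`, every
`a ∈ k^m ∖ 𝒬₀` and every ball `B(r)` around the origin,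
`|{t ∈ B(r) : 𝐮(t)a ∈ 𝒬}| ≤ ε |{t ∈ B(r) : 𝐮(t)a ∈ 𝒬₀}|`.
-/

open MeasureTheory MvPolynomial

theorem coeff_finsetProd_line {σ R : Type*} [CommRing R] (s : Finset σ)
    (e : σ → ℕ) (x v : σ → R) :
    (∏ i ∈ s, (Polynomial.C (x i) + Polynomial.X * Polynomial.C (v i)) ^ e i).natDegree
        ≤ ∑ i ∈ s, e i ∧
      (∏ i ∈ s, (Polynomial.C (x i) + Polynomial.X * Polynomial.C (v i)) ^ e i).coeff
        (∑ i ∈ s, e i) = ∏ i ∈ s, v i ^ e i := by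
  classical
  have hlin (i : σ) :
      (Polynomial.C (x i) + Polynomial.X * Polynomial.C (v i)).natDegree ≤ 1 := by
    compute_degree
  have hpow (i : σ) :
      ((Polynomial.C (x i) + Polynomial.X * Polynomial.C (v i)) ^ e i).natDegree ≤ e i := by
    simpa using Polynomial.natDegree_pow_le_of_le (e i) (hlin i)
  induction s using Finset.induction_on with
  | empty => simp
  | insert i s hi ih =>
    rw [Finset.prod_insert hi, Finset.sum_insert hi, Finset.prod_insert hi]
    refine ⟨Polynomial.natDegree_mul_le_of_le (hpow i) ih.1, ?_⟩
    rw [Polynomial.coeff_mul_add_eq_of_natDegree_le (hpow i) ih.1, ih.2]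
    congr 1
    simpa using Polynomial.coeff_pow_of_natDegree_le (m := e i) (hlin i)

theorem coeff_totalDegree_aeval_line {σ R : Type*} [Fintype σ] [CommRing R]
    (p : MvPolynomial σ R) (x v : σ → R) :
    (aeval (fun i => Polynomial.C (x i) + Polynomial.X * Polynomial.C (v i)) p).coeff
        p.totalDegree = eval v (homogeneousComponent p.totalDegree p) := by
  classical
  rw [homogeneousComponent_apply, map_sum, aeval_def, eval₂_eq', Polynomial.finsetSum_coeff,
    Finset.sum_filter]
  refine Finset.sum_congr rfl fun e he => ?_
  have hle : e.degree ≤ p.totalDegree := le_totalDegree he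
  have hline := coeff_finsetProd_line Finset.univ e x v
  rw [← Finsupp.degree_eq_sum] at hline
  rw [← Polynomial.C_eq_algebraMap, Polynomial.coeff_C_mul]
  split_ifs with h
  · rw [← h, hline.2, eval_monomial, Finsupp.prod_fintype _ _ (by simp)]
  · rw [Polynomial.coeff_eq_zero_of_natDegree_lt (hline.1.trans_lt (lt_of_le_of_ne hle h)),
      mul_zero]

theorem homogeneousComponent_totalDegree_ne_zero {σ R : Type*} [CommRing R]
    {p : MvPolynomial σ R} (hp : p ≠ 0) : homogeneousComponent p.totalDegree p ≠ 0 := by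
  obtain ⟨e, he, hdeg⟩ := Finset.exists_mem_eq_sup p.support
    (support_nonempty.2 hp) fun s => s.sum fun _ n => n
  intro h
  have hcoeff := congrArg (coeff e) h
  have hdegree : e.degree = p.totalDegree := hdeg.symm
  rw [coeff_homogeneousComponent, coeff_zero, if_pos hdegree] at hcoeff
  exact mem_support_iff.1 he hcoeff

/-- A nonzero polynomial has a direction such that it has finitely many zeros on each line in that
direction. -/
theorem exists_direction_finite_zeros {σ R : Type*} [Fintype σ] [CommRing R] [IsDomain R]
    [Infinite R] {p : MvPolynomial σ R} (hp : p ≠ 0) :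
    ∃ v : σ → R, ∀ x : σ → R, {s : R | eval (x + s • v) p = 0}.Finite := by
  obtain ⟨v, hv⟩ : ∃ v, eval v (homogeneousComponent p.totalDegree p) ≠ 0 := by
    by_contra! h
    exact homogeneousComponent_totalDegree_ne_zero hp
      (MvPolynomial.funext fun v => by rw [h v, map_zero])
  refine ⟨v, fun x => ?_⟩
  set q := aeval (fun i => Polynomial.C (x i) + Polynomial.X * Polynomial.C (v i)) p with hq
  have hq0 : q ≠ 0 := by
    intro h
    apply hv
    rw [← coeff_totalDegree_aeval_line p x v, ← hq, h, Polynomial.coeff_zero]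
  refine (Polynomial.finite_setOfPred_isRoot hq0).subset fun s hs => ?_
  have heval : q.eval s = eval (x + s • v) p := by
    rw [hq, ← Polynomial.coe_evalRingHom, aeval_def, hom_eval₂]
    have : (Polynomial.evalRingHom s).comp (algebraMap R (Polynomial R)) = RingHom.id R := by
      ext; simp
    rw [this, eval, coe_eval₂Hom]
    congr 1
    ext i
    simp only [Polynomial.coe_evalRingHom, Polynomial.eval_add,
      Polynomial.eval_mul, Polynomial.eval_C, Polynomial.eval_X, Pi.add_apply, Pi.smul_apply,
      smul_eq_mul]
  exact heval.trans hs

theorem totalDegree_aeval_le {σ τ R : Type*} [CommRing R] {D : ℕ}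
    (g : σ → MvPolynomial τ R) (hg : ∀ i, (g i).totalDegree ≤ D) (p : MvPolynomial σ R) :
    (aeval g p).totalDegree ≤ p.totalDegree * D := by
  rw [aeval_def, eval₂_eq]
  refine totalDegree_finsetSum_le fun e he => ?_
  refine (totalDegree_mul _ _).trans ?_
  rw [algebraMap_eq, totalDegree_C, zero_add]
  refine (totalDegree_finsetProd _ _).trans ?_
  refine le_trans (Finset.sum_le_sum fun i _ =>
    (totalDegree_pow _ _).trans (Nat.mul_le_mul_left _ (hg i))) ?_
  rw [← Finset.sum_mul]
  exact Nat.mul_le_mul_right _ (le_totalDegree he)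

theorem eval_aeval {σ τ R : Type*} [CommRing R] (g : σ → MvPolynomial τ R)
    (p : MvPolynomial σ R) (y : τ → R) :
    eval y (aeval g p) = eval (fun i => eval y (g i)) p := by
  induction p using MvPolynomial.induction_on with
  | C a => simp
  | add p q hp hq => simp only [map_add, hp, hq]
  | mul_X p i hp => simp only [map_mul, hp, aeval_X, eval_X]

/-- Covering by maximal balls: if every ball not contained in the open set `G` meets `E` in at most
`c` times the measure of the concentric ball of the next smaller radius, then `μ E ≤ c * μ G`. -/
theorem measure_le_of_forall_maximal_ball {X : Type*} [PseudoMetricSpace X] [IsUltrametricDist X]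
    [TopologicalSpace.SeparableSpace X] [MeasurableSpace X] [OpensMeasurableSpace X]
    (μ : Measure X) {ρ : ℕ → ℝ} (hρ : ∀ n, 0 < ρ n) (hanti : Antitone ρ)
    (hlim : Filter.Tendsto ρ Filter.atTop (nhds 0)) {x₀ : X} {E G : Set X} {c : ENNReal}
    (hEG : E ⊆ G) (hGsub : G ⊆ Metric.closedBall x₀ (ρ 0)) (hG : IsOpen G)
    (hne : ¬ Metric.closedBall x₀ (ρ 0) ⊆ G)
    (h : ∀ n, ∀ x ∈ Metric.closedBall x₀ (ρ 0), ¬ Metric.closedBall x (ρ n) ⊆ G →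
      μ (E ∩ Metric.closedBall x (ρ n)) ≤ c * μ (Metric.closedBall x (ρ (n + 1)))) :
    μ E ≤ c * μ G := by
  classical
  have hex (x : X) (hx : x ∈ E) : ∃ n, Metric.closedBall x (ρ n) ⊆ G := by
    obtain ⟨r, hr, hball⟩ := Metric.nhds_basis_closedBall.mem_iff.1 (hG.mem_nhds (hEG hx))
    obtain ⟨n, hn⟩ := (hlim.eventually_lt_const hr).exists
    exact ⟨n, (Metric.closedBall_subset_closedBall hn.le).trans hball⟩
  choose! ν hν using hex
  let N : X → ℕ := fun x => sInf {n | Metric.closedBall x (ρ n) ⊆ G}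
  have hN (x : X) (hx : x ∈ E) : Metric.closedBall x (ρ (N x)) ⊆ G :=
    Nat.sInf_mem (s := {n | Metric.closedBall x (ρ n) ⊆ G}) ⟨ν x, hν x hx⟩
  have hNmin (x : X) (n : ℕ) (hn : Metric.closedBall x (ρ n) ⊆ G) : N x ≤ n := Nat.sInf_le hn
  let J : X → Set X := fun x => Metric.closedBall x (ρ (N x))
  have hmem (x : X) : x ∈ J x := Metric.mem_closedBall_self (hρ _).le
  have key (x : X) (hx : x ∈ E) (y : X) (hy : y ∈ E) (hxy : N x ≤ N y)
      (hd : ¬ Disjoint (J x) (J y)) : J x = J y := by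
    obtain ⟨z, hzx, hzy⟩ := Set.not_disjoint_iff.1 hd
    have hyx : y ∈ J x := by
      have h1 : Metric.closedBall x (ρ (N x)) = Metric.closedBall z (ρ (N x)) :=
        IsUltrametricDist.closedBall_eq_of_mem hzx
      change y ∈ Metric.closedBall x (ρ (N x))
      rw [h1, Metric.mem_closedBall, dist_comm]
      exact (Metric.mem_closedBall.1 hzy).trans (hanti hxy)
    have heq : Metric.closedBall x (ρ (N x)) = Metric.closedBall y (ρ (N x)) :=
      IsUltrametricDist.closedBall_eq_of_mem hyx
    have hN' : N y = N x := le_antisymm (hNmin y _ (heq ▸ hN x hx)) hxy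
    change Metric.closedBall x (ρ (N x)) = Metric.closedBall y (ρ (N y))
    rw [hN', heq]
  have hdisj : (J '' E).PairwiseDisjoint id := by
    rintro _ ⟨x, hx, rfl⟩ _ ⟨y, hy, rfl⟩ hxy
    by_contra hd
    rcases le_total (N x) (N y) with hle | hle
    · exact hxy (key x hx y hy hle hd)
    · exact hxy (key y hy x hx hle fun h' => hd h'.symm).symm
  have hcount : (J '' E).Countable := by
    refine hdisj.countable_of_isOpen ?_ ?_
    · rintro _ ⟨x, -, rfl⟩
      exact IsUltrametricDist.isOpen_closedBall _ (hρ _).ne'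
    · rintro _ ⟨x, -, rfl⟩
      exact ⟨x, hmem x⟩
  have hbound : ∀ s ∈ J '' E, μ (E ∩ s) ≤ c * μ s := by
    rintro _ ⟨x, hx, rfl⟩
    have hx₀ : x ∈ Metric.closedBall x₀ (ρ 0) := hGsub (hEG hx)
    have hN0 : N x ≠ 0 := by
      intro h0
      have := hN x hx
      rw [h0, ← IsUltrametricDist.closedBall_eq_of_mem hx₀] at this
      exact hne this
    obtain ⟨n, hn⟩ := Nat.exists_eq_succ_of_ne_zero hN0
    have hnot : ¬ Metric.closedBall x (ρ n) ⊆ G := fun hsub => by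
      have := hNmin x n hsub
      omega
    have hle := h n x hx₀ hnot
    refine (measure_mono (Set.inter_subset_inter_right E
      (Metric.closedBall_subset_closedBall (hanti ?_)))).trans (hle.trans_eq ?_)
    · omega
    · change _ = c * μ (Metric.closedBall x (ρ (N x)))
      rw [hn]
  calc μ E ≤ μ (⋃ s ∈ J '' E, E ∩ s) :=
        measure_mono fun x hx => Set.mem_biUnion (Set.mem_image_of_mem J hx) ⟨hx, hmem x⟩
    _ ≤ ∑' s : J '' E, μ (E ∩ s) := measure_biUnion_le _ hcount _
    _ ≤ ∑' s : J '' E, c * μ (s : Set X) := ENNReal.tsum_le_tsum fun s => hbound s s.2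
    _ = c * ∑' s : J '' E, μ (s : Set X) := ENNReal.tsum_mul_left
    _ = c * μ (⋃ s ∈ J '' E, s) := by
        congr 1
        refine (measure_biUnion (f := id) hcount hdisj ?_).symm
        rintro _ ⟨x, -, rfl⟩
        exact Metric.isClosed_closedBall.measurableSet
    _ ≤ c * μ G := by
        gcongr
        refine Set.iUnion₂_subset ?_
        rintro _ ⟨x, hx, rfl⟩
        exact hN x hx

theorem norm_eval_linearCombination_le {k : Type*} [NontriviallyNormedField k]
    [IsUltrametricDist k] {d : ℕ} {s : Finset (Fin d →₀ ℕ)}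
    (c : s → k) {t : Fin d → k} (ht : t ∈ Metric.closedBall 0 1) :
    ‖eval t (Fintype.linearCombination k (fun e : s => monomial (e : Fin d →₀ ℕ) (1 : k)) c)‖
      ≤ ‖c‖ := by
  rw [Fintype.linearCombination_apply, map_sum]
  refine IsUltrametricDist.norm_sum_le_of_forall_le_of_nonneg (norm_nonneg _) fun e _ => ?_
  rw [smul_eval, eval_monomial, one_mul, norm_mul, Finsupp.prod_fintype _ _ (by simp), norm_prod]
  refine (mul_le_of_le_one_right (norm_nonneg _) ?_).trans (norm_le_pi_norm c e)
  refine Finset.prod_le_one (fun i _ => norm_nonneg _) fun i _ => ?_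
  rw [norm_pow]
  exact pow_le_one₀ (norm_nonneg _)
    ((norm_le_pi_norm t i).trans (mem_closedBall_zero_iff.1 ht))

theorem coeff_linearCombination_monomial {σ k : Type*} [CommRing k]
    {s : Finset (σ →₀ ℕ)} (c : s → k) (e : s) :
    coeff (e : σ →₀ ℕ)
      (Fintype.linearCombination k (fun e : s => monomial (e : σ →₀ ℕ) (1 : k)) c) = c e := by
  classical
  simp [Fintype.linearCombination_apply, coeff_sum, coeff_monomial]

theorem exists_ball_zero_eq_closedBall {k : Type*} [NontriviallyNormedField k]
    [LocallyCompactSpace k] [IsUltrametricDist k] {d : ℕ} {r : ℝ} (hr : 0 < r) :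
    ∃ u : k, u ≠ 0 ∧ Metric.ball (0 : Fin d → k) r = Metric.closedBall 0 ‖u‖ := by
  have : ProperSpace k := ProperSpace.of_locallyCompactSpace k
  have hcompact : IsCompact (Metric.ball (0 : k) r) :=
    (isCompact_closedBall (0 : k) r).of_isClosed_subset (IsUltrametricDist.isClosed_ball 0 r)
      Metric.ball_subset_closedBall
  obtain ⟨u, hu, hmax⟩ := hcompact.exists_isMaxOn ⟨0, Metric.mem_ball_self hr⟩
    continuous_norm.continuousOn
  rw [mem_ball_zero_iff] at hu
  have hu0 : u ≠ 0 := by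
    rintro rfl
    obtain ⟨w, hw0, hw⟩ := NormedField.exists_norm_lt k hr
    have := hmax (mem_ball_zero_iff.2 hw)
    simp only [Set.mem_ofPred_eq, norm_zero] at this
    exact hw0.not_ge this
  refine ⟨u, hu0, Set.ext fun t => ?_⟩
  rw [mem_ball_zero_iff, mem_closedBall_zero_iff]
  refine ⟨fun ht => (pi_norm_le_iff_of_nonneg (norm_nonneg u)).2 fun i => ?_,
    fun ht => ht.trans_lt hu⟩
  exact hmax (mem_ball_zero_iff.2 ((norm_le_pi_norm t i).trans_lt ht))

section LocalField

variable {k : Type*} [NontriviallyNormedField k] [LocallyCompactSpace k] {d : ℕ}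
  [MeasurableSpace (Fin d → k)] [BorelSpace (Fin d → k)]
  (lam : Measure (Fin d → k)) [lam.IsAddHaarMeasure]

/-- The zero set of a nonzero polynomial over a local field is a null set. -/
theorem measure_setOf_eval_eq_zero {p : MvPolynomial (Fin d) k} (hp : p ≠ 0) :
    lam {t | eval t p = 0} = 0 := by
  have : ProperSpace k := ProperSpace.of_locallyCompactSpace k
  obtain ⟨v, hv⟩ := exists_direction_finite_zeros hp
  obtain ⟨ϖ, hϖ0, hϖ1⟩ := NormedField.exists_norm_lt_one k
  have hcover : {t | eval t p = 0} = ⋃ R : ℕ, {t | eval t p = 0} ∩ Metric.closedBall 0 R := by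
    rw [← Set.inter_iUnion, Metric.iUnion_closedBall_nat, Set.inter_univ]
  rw [hcover]
  refine measure_iUnion_null fun R => ?_
  set E := {t | eval t p = 0} ∩ Metric.closedBall (0 : Fin d → k) R with hE
  have hEclosed : IsClosed E :=
    (isClosed_singleton.preimage (MvPolynomial.continuous_eval p)).inter Metric.isClosed_closedBall
  let T : ℕ → Set (Fin d → k) := fun n => (fun t => t + ϖ ^ n • v) ⁻¹' E
  have hT (n : ℕ) : lam (T n) = lam E := measure_preimage_add_right lam _ _
  have hTmeas (n : ℕ) : MeasurableSet (T n) :=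
    (hEclosed.preimage (by fun_prop)).measurableSet
  let F : ℕ → Set (Fin d → k) := fun n => ⋃ m, ⋃ (_ : n ≤ m), T m
  have hFanti : Antitone F := fun a b hab =>
    Set.iUnion_subset fun m => Set.iUnion_subset fun hm =>
      Set.subset_iUnion₂_of_subset m (hab.trans hm) subset_rfl
  have hFfin : lam (F 0) ≠ ⊤ := by
    refine ne_top_of_le_ne_top
      (isCompact_closedBall (0 : Fin d → k) (R + ‖v‖)).measure_ne_top (measure_mono ?_)
    refine Set.iUnion₂_subset fun m _ t ht => ?_
    have h1 : ‖t + ϖ ^ m • v‖ ≤ R := by simpa using ht.2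
    have h2 : ‖ϖ ^ m • v‖ ≤ ‖v‖ := by
      rw [norm_smul, norm_pow]
      exact mul_le_of_le_one_left (norm_nonneg _) (pow_le_one₀ (norm_nonneg _) hϖ1.le)
    rw [mem_closedBall_zero_iff]
    calc ‖t‖ = ‖(t + ϖ ^ m • v) - ϖ ^ m • v‖ := by rw [add_sub_cancel_right]
      _ ≤ _ := (norm_sub_le _ _).trans (add_le_add h1 h2)
  have hempty : ⋂ n, F n = ∅ := by
    refine Set.eq_empty_of_forall_notMem fun t ht => ?_
    have hinf : {m | t ∈ T m}.Infinite := by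
      refine Set.infinite_of_forall_exists_gt fun n => ?_
      obtain ⟨m, hm, htm⟩ := Set.mem_iUnion₂.1 (Set.mem_iInter.1 ht (n + 1))
      exact ⟨m, htm, hm⟩
    have hinj : Function.Injective fun m : ℕ => ϖ ^ m := by
      refine Function.Injective.of_comp (f := norm) ?_
      have : norm ∘ (fun m : ℕ => ϖ ^ m) = fun m => ‖ϖ‖ ^ m := by ext; simp
      rw [this]
      exact pow_right_injective₀ hϖ0 hϖ1.ne
    refine (hinf.image hinj.injOn) ((hv t).subset ?_)
    rintro _ ⟨m, hm, rfl⟩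
    exact hm.1
  have hlim := tendsto_measure_iInter_atTop (μ := lam) (s := F)
    (fun n => (MeasurableSet.iUnion fun m => MeasurableSet.iUnion fun _ =>
      hTmeas m).nullMeasurableSet) hFanti ⟨0, hFfin⟩
  rw [hempty, measure_empty] at hlim
  refine le_antisymm (ge_of_tendsto' hlim fun n => ?_) zero_le
  rw [← hT n]
  exact measure_mono (Set.subset_iUnion₂_of_subset n le_rfl subset_rfl)

theorem exists_measure_norm_eval_lt {p : MvPolynomial (Fin d) k} (hp : p ≠ 0) {ε : ENNReal}
    (hε : ε ≠ 0) :
    ∃ η : ℝ, 0 < η ∧ lam {t ∈ Metric.closedBall 0 1 | ‖eval t p‖ < η} ≤ ε := by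
  have : ProperSpace k := ProperSpace.of_locallyCompactSpace k
  let F : ℕ → Set (Fin d → k) :=
    fun n => {t ∈ Metric.closedBall 0 1 | ‖eval t p‖ < 1 / ((n : ℝ) + 1)}
  have hcont : Continuous fun t => ‖eval t p‖ := (MvPolynomial.continuous_eval p).norm
  have hFmeas (n : ℕ) : MeasurableSet (F n) :=
    Metric.isClosed_closedBall.measurableSet.inter
      (isOpen_lt hcont continuous_const).measurableSet
  have hFanti : Antitone F := fun a b hab t ht =>
    ⟨ht.1, ht.2.trans_le (Nat.one_div_le_one_div hab)⟩
  have hlim := tendsto_measure_iInter_atTop (μ := lam) (s := F)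
    (fun n => (hFmeas n).nullMeasurableSet) hFanti
    ⟨0, ne_top_of_le_ne_top (isCompact_closedBall (0 : Fin d → k) 1).measure_ne_top
      (measure_mono fun t ht => ht.1)⟩
  have hnull : lam (⋂ n, F n) = 0 := by
    refine measure_mono_null (fun t ht => ?_) (measure_setOf_eval_eq_zero lam hp)
    refine norm_le_zero_iff.1 (ge_of_tendsto' tendsto_one_div_add_atTop_nhds_zero_nat fun n => ?_)
    exact (Set.mem_iInter.1 ht n).2.le
  rw [hnull] at hlim
  obtain ⟨n, hn⟩ := (hlim.eventually_lt_const (pos_iff_ne_zero.2 hε)).exists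
  exact ⟨1 / ((n : ℝ) + 1), Nat.one_div_pos_of_nat, hn.le⟩

/-- On the unit ball, polynomials of bounded degree are rarely small compared with their values,
uniformly in the polynomial. -/
theorem exists_measure_norm_eval_lt_of_totalDegree_le [IsUltrametricDist k] (N : ℕ) {ε : ENNReal}
    (hε : ε ≠ 0) :
    ∃ η : ℝ, 0 < η ∧ η ≤ 1 ∧ ∀ p : MvPolynomial (Fin d) k, p.totalDegree ≤ N →
      ∀ x ∈ Metric.closedBall (0 : Fin d → k) 1,
        lam {t ∈ Metric.closedBall 0 1 | ‖eval t p‖ < η * ‖eval x p‖} ≤ ε := by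
  classical
  have : ProperSpace k := ProperSpace.of_locallyCompactSpace k
  let s : Finset (Fin d →₀ ℕ) := Finset.Iic (Finsupp.equivFunOnFinite.symm fun _ => N)
  let P : (s → k) →ₗ[k] MvPolynomial (Fin d) k :=
    Fintype.linearCombination k fun e : s => monomial (e : Fin d →₀ ℕ) (1 : k)
  have hPcoeff (c : s → k) (e : s) : coeff (e : Fin d →₀ ℕ) (P c) = c e :=
    coeff_linearCombination_monomial c e
  have hPnorm (c : s → k) {t : Fin d → k} (ht : t ∈ Metric.closedBall 0 1) :
      ‖eval t (P c)‖ ≤ ‖c‖ := norm_eval_linearCombination_le c ht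
  have hPne (c : s → k) (hc : c ∈ Metric.sphere (0 : s → k) 1) : P c ≠ 0 := by
    intro h
    have : c = 0 := by
      ext e
      rw [← hPcoeff c e, h, coeff_zero, Pi.zero_apply]
    simp [this] at hc
  have hrep (p : MvPolynomial (Fin d) k) (hp : p.totalDegree ≤ N) :
      P (fun e => coeff (e : Fin d →₀ ℕ) p) = p := by
    have hsub : p.support ⊆ s := fun e he => by
      refine Finset.mem_Iic.2 fun i => ?_
      have h1 : e.degree ≤ p.totalDegree := le_totalDegree he
      exact (Finsupp.le_degree i e).trans (h1.trans hp)
    ext e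
    by_cases he : e ∈ s
    · exact hPcoeff _ ⟨e, he⟩
    · rw [notMem_support_iff.1 fun h => he (hsub h)]
      simp only [P, Fintype.linearCombination_apply, coeff_sum, coeff_smul, coeff_monomial]
      refine Finset.sum_eq_zero fun e' _ => ?_
      rw [if_neg fun h : (e' : Fin d →₀ ℕ) = e => he (h ▸ e'.2), smul_zero]
  choose! η hη0 hη using fun (c : s → k) (hc : c ∈ Metric.sphere (0 : s → k) 1) =>
    exists_measure_norm_eval_lt lam (hPne c hc) hε
  obtain ⟨T, hT, hTcover⟩ := (isCompact_sphere (0 : s → k) 1).elim_nhds_subcover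
    (fun c => Metric.ball c (η c)) fun c hc => Metric.ball_mem_nhds c (hη0 c hc)
  obtain ⟨η₀, hη₀, hη₀1, hη₀T⟩ : ∃ η₀ : ℝ, 0 < η₀ ∧ η₀ ≤ 1 ∧ ∀ c ∈ T, η₀ ≤ η c := by
    have h1 : ∀ᶠ y in nhdsWithin (0 : ℝ) (Set.Ioi 0), ∀ c ∈ T, y ≤ η c :=
      (Filter.eventually_all_finset T).2 fun c hc =>
        mem_nhdsWithin_of_mem_nhds (Iic_mem_nhds (hη0 c (hT c hc)))
    have h2 : ∀ᶠ y in nhdsWithin (0 : ℝ) (Set.Ioi 0), y ≤ 1 :=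
      mem_nhdsWithin_of_mem_nhds (Iic_mem_nhds one_pos)
    obtain ⟨y, ⟨hy1, hy2⟩, hy0⟩ := ((h1.and h2).and self_mem_nhdsWithin).exists
    exact ⟨y, hy0, hy2, hy1⟩
  refine ⟨η₀, hη₀, hη₀1, fun p hp x hx => ?_⟩
  set c : s → k := fun e => coeff (e : Fin d →₀ ℕ) p with hc
  by_cases hc0 : c = 0
  · have : p = 0 := by rw [← hrep p hp, ← hc, hc0, map_zero]
    simp [this]
  have hs : Nonempty s := by
    obtain ⟨e, -⟩ := Function.ne_iff.1 hc0
    exact ⟨e⟩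
  obtain ⟨e₀, he₀⟩ := Finite.exists_max fun e => ‖c e‖
  have hnorm : ‖c‖ = ‖c e₀‖ :=
    le_antisymm ((pi_norm_le_iff_of_nonneg (norm_nonneg _)).2 he₀) (norm_le_pi_norm c e₀)
  have hce₀ : c e₀ ≠ 0 := by rwa [← norm_ne_zero_iff, ← hnorm, norm_ne_zero_iff]
  set b := (c e₀)⁻¹ • c with hb
  have hbs : b ∈ Metric.sphere (0 : s → k) 1 := by
    rw [mem_sphere_zero_iff_norm, hb, norm_smul, norm_inv, hnorm,
      inv_mul_cancel₀ (norm_ne_zero_iff.2 hce₀)]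
  have hpb : p = c e₀ • P b := by
    rw [hb, map_smul, smul_smul, mul_inv_cancel₀ hce₀, one_smul, hc, hrep p hp]
  obtain ⟨c', hc'T, hbc'⟩ := Set.mem_iUnion₂.1 (hTcover hbs)
  refine (measure_mono ?_).trans (hη c' (hT c' hc'T))
  intro t ht
  refine ⟨ht.1, ?_⟩
  have hbt : ‖eval t (P b)‖ < η c' := by
    have h1 := ht.2
    have h2 : ‖eval x p‖ ≤ ‖c e₀‖ := by
      rw [← hnorm, ← hrep p hp]
      exact hPnorm c hx
    have h3 : ‖eval t p‖ = ‖c e₀‖ * ‖eval t (P b)‖ := by rw [hpb, smul_eval, norm_mul]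
    have h4 : ‖c e₀‖ * ‖eval t (P b)‖ < ‖c e₀‖ * η₀ := by
      rw [← h3, mul_comm ‖c e₀‖]
      exact h1.trans_le (mul_le_mul_of_nonneg_left h2 hη₀.le)
    exact (lt_of_mul_lt_mul_left h4 (norm_nonneg _)).trans_le (hη₀T c' hc'T)
  have hdiff : ‖eval t (P (c' - b))‖ < η c' := by
    refine (hPnorm _ ht.1).trans_lt ?_
    rwa [← dist_eq_norm, dist_comm]
  have : eval t (P c') = eval t (P b) + eval t (P (c' - b)) := by
    rw [map_sub, map_sub, add_sub_cancel]
  rw [this]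
  exact (IsUltrametricDist.norm_add_le_max _ _).trans_lt (max_lt hbt hdiff)

theorem exists_measure_eq_mul_measure_affine_preimage (u : kˣ) :
    ∃ κ : ENNReal, ∀ (x : Fin d → k) (T : Set (Fin d → k)),
      lam T = κ * lam {y | x + (u : k) • y ∈ T} := by
  have : ProperSpace k := ProperSpace.of_locallyCompactSpace k
  refine ⟨distribHaarChar (Fin d → k) u, fun x T => ?_⟩
  rw [distribHaarChar_mul, ← measure_preimage_add lam x T]
  congr 1
  ext t
  rw [Set.mem_smul_set_iff_inv_smul_mem]
  change x + t ∈ T ↔ x + u • (u⁻¹ • t) ∈ T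
  rw [smul_inv_smul]

/-- The scale-invariant form of `exists_measure_norm_eval_lt_of_totalDegree_le`. -/
theorem exists_measure_norm_eval_lt_closedBall [IsUltrametricDist k] (N : ℕ) {ε : ENNReal}
    (hε : ε ≠ 0) {ϖ : k} (hϖ : ϖ ≠ 0) :
    ∃ η : ℝ, 0 < η ∧ η ≤ 1 ∧ ∀ p : MvPolynomial (Fin d) k, p.totalDegree ≤ N →
      ∀ (u : k) (_ : u ≠ 0) (x₀ : Fin d → k), ∀ x ∈ Metric.closedBall x₀ ‖u‖,
        lam {t ∈ Metric.closedBall x₀ ‖u‖ | ‖eval t p‖ < η * ‖eval x p‖} ≤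
          ε * lam (Metric.closedBall x₀ ‖u * ϖ‖) := by
  have hpos : lam (Metric.closedBall 0 ‖ϖ‖) ≠ 0 :=
    (Metric.measure_closedBall_pos lam 0 (norm_pos_iff.2 hϖ)).ne'
  obtain ⟨η, hη0, hη1, hη⟩ :=
    exists_measure_norm_eval_lt_of_totalDegree_le lam N (mul_ne_zero hε hpos)
  refine ⟨η, hη0, hη1, fun p hp u hu x₀ x hx => ?_⟩
  obtain ⟨κ, hκ⟩ := exists_measure_eq_mul_measure_affine_preimage lam (Units.mk0 u hu)
  simp only [Units.val_mk0] at hκ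
  rw [hκ x₀ {t ∈ Metric.closedBall x₀ ‖u‖ | _}, hκ x₀ (Metric.closedBall x₀ ‖u * ϖ‖),
    mul_left_comm]
  gcongr
  let q : MvPolynomial (Fin d) k := aeval (fun i => C (x₀ i) + C u * X i) p
  have hq : q.totalDegree ≤ N := by
    refine (totalDegree_aeval_le (D := 1) _ (fun i => ?_) p).trans (by simpa using hp)
    refine (totalDegree_add _ _).trans (max_le (by simp) ((totalDegree_mul _ _).trans ?_))
    simp
  have heval (y : Fin d → k) : eval y q = eval (x₀ + u • y) p := by
    rw [eval_aeval]
    congr 2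
    ext i
    simp
  have hball (y : Fin d → k) (w : k) :
      x₀ + u • y ∈ Metric.closedBall x₀ ‖u * w‖ ↔ y ∈ Metric.closedBall 0 ‖w‖ := by
    rw [mem_closedBall_iff_norm, add_sub_cancel_left, norm_smul, norm_mul,
      mem_closedBall_zero_iff, mul_le_mul_iff_right₀ (norm_pos_iff.2 hu)]
  have hball_one (y : Fin d → k) :
      x₀ + u • y ∈ Metric.closedBall x₀ ‖u‖ ↔ y ∈ Metric.closedBall 0 1 := by
    simpa using hball y 1
  have hxy : x₀ + u • (u⁻¹ • (x - x₀)) = x := by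
    rw [smul_inv_smul₀ hu, add_sub_cancel]
  have hmain := hη q hq (u⁻¹ • (x - x₀)) ((hball_one _).1 (by rwa [hxy]))
  rw [heval, hxy] at hmain
  simp only [Set.mem_ofPred_eq, hball_one, hball, ← heval, Set.ofPred_mem_eq]
  exact hmain

end LocalField

/-- A polynomial curve starting outside `G` spends little time in `Q`, relative to `G`, if points
outside `G` are separated from `Q` by polynomials that are rarely small along the curve. -/
theorem measure_polynomial_preimage_le {k : Type*} [NontriviallyNormedField k]
    [LocallyCompactSpace k] [IsUltrametricDist k] {d : ℕ} [MeasurableSpace (Fin d → k)]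
    [BorelSpace (Fin d → k)] (lam : Measure (Fin d → k)) {m : ℕ}
    {g : Fin m → MvPolynomial (Fin d) k} {Q G : Set (Fin m → k)} (hQG : Q ⊆ G) (hG : IsOpen G)
    (h₀ : (fun i => eval 0 (g i)) ∉ G) {ε : ENNReal} {ϖ : k} (hϖ0 : ϖ ≠ 0) (hϖ1 : ‖ϖ‖ < 1)
    (hsep : ∀ x ∉ G, ∃ (f : MvPolynomial (Fin m) k) (η : ℝ),
      (∀ y ∈ Q, ‖eval y f‖ < η * ‖eval x f‖) ∧
      ∀ (u : k) (_ : u ≠ 0) (x₀ : Fin d → k), ∀ s ∈ Metric.closedBall x₀ ‖u‖,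
        lam {t ∈ Metric.closedBall x₀ ‖u‖ |
          ‖eval t (aeval g f)‖ < η * ‖eval s (aeval g f)‖} ≤
          ε * lam (Metric.closedBall x₀ ‖u * ϖ‖))
    {r : ℝ} (hr : 0 < r) :
    lam {t ∈ Metric.ball 0 r | (fun i => eval t (g i)) ∈ Q} ≤
      ε * lam {t ∈ Metric.ball 0 r | (fun i => eval t (g i)) ∈ G} := by
  have : ProperSpace k := ProperSpace.of_locallyCompactSpace k
  have hcont : Continuous fun t : Fin d → k => fun i => eval t (g i) :=
    continuous_pi fun i => MvPolynomial.continuous_eval (g i)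
  obtain ⟨u, hu, hball⟩ := exists_ball_zero_eq_closedBall (k := k) (d := d) hr
  have hnorm (n : ℕ) : ‖u * ϖ ^ n‖ = ‖u‖ * ‖ϖ‖ ^ n := by rw [norm_mul, norm_pow]
  refine measure_le_of_forall_maximal_ball lam (ρ := fun n => ‖u * ϖ ^ n‖) (x₀ := 0)
    (fun n => norm_pos_iff.2 (mul_ne_zero hu (pow_ne_zero n hϖ0))) ?_ ?_
    (fun t ht => ⟨ht.1, hQG ht.2⟩) ?_ (Metric.isOpen_ball.inter (hG.preimage hcont)) ?_ ?_
  · intro a b hab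
    simp only [hnorm]
    exact mul_le_mul_of_nonneg_left (pow_le_pow_of_le_one (norm_nonneg _) hϖ1.le hab)
      (norm_nonneg _)
  · simp only [hnorm]
    simpa using (tendsto_pow_atTop_nhds_zero_of_lt_one (norm_nonneg ϖ) hϖ1).const_mul ‖u‖
  · rw [pow_zero, mul_one, ← hball]
    exact Set.inter_subset_left
  · intro hsub
    exact h₀ (hsub (Metric.mem_closedBall_self (norm_nonneg _))).2
  · intro n x₀ hx₀ hnot
    obtain ⟨s, hs, hsG⟩ := Set.not_subset.1 hnot
    have hsball : s ∈ Metric.ball 0 r := by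
      rw [hball]
      rw [pow_zero, mul_one] at hx₀
      rw [IsUltrametricDist.closedBall_eq_of_mem hx₀]
      refine Metric.closedBall_subset_closedBall ?_ hs
      rw [hnorm]
      exact mul_le_of_le_one_right (norm_nonneg _) (pow_le_one₀ (norm_nonneg _) hϖ1.le)
    obtain ⟨f, η, hQ, hη⟩ := hsep _ fun h => hsG ⟨hsball, h⟩
    rw [pow_succ, ← mul_assoc]
    refine (measure_mono ?_).trans
      (hη (u * ϖ ^ n) (mul_ne_zero hu (pow_ne_zero n hϖ0)) x₀ s hs)
    intro t ht
    refine ⟨ht.2, ?_⟩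
    rw [eval_aeval, eval_aeval]
    exact hQ _ ht.1.2

theorem linearization_measure_estimate
    (k : Type*) [NontriviallyNormedField k] [LocallyCompactSpace k]
    [IsUltrametricDist k]
    (m : ℕ)
    -- `M` is a Zariski closed subset of `k^m`:
    (M : Set (Fin m → k)) (S : Set (MvPolynomial (Fin m) k))
    (hM : M = {x : Fin m → k | ∀ p ∈ S, MvPolynomial.eval x p = 0})
    (A : Set (Fin m → k)) (hA : A ⊆ M) (hAc : IsCompact A)
    (ε : ℝ) (hε : 0 < ε) (d D : ℕ)
    [MeasurableSpace (Fin d → k)] [BorelSpace (Fin d → k)]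
    (lam : Measure (Fin d → k)) [lam.IsAddHaarMeasure] :
    ∃ B : Set (Fin m → k), B ⊆ M ∧ IsCompact B ∧
      ∀ 𝒬₀ : Set (Fin m → k), IsOpen 𝒬₀ → B ⊆ 𝒬₀ →
      ∃ 𝒬 : Set (Fin m → k), IsOpen 𝒬 ∧ A ⊆ 𝒬 ∧
        -- for every unipotent subgroup of `GL_m(k)` with a polynomial
        -- parametrization `𝐮` of degree `≤ D` and `𝐮(0) = e`:
        ∀ uP : Matrix (Fin m) (Fin m) (MvPolynomial (Fin d) k),
          (∀ i j, (uP i j).totalDegree ≤ D) →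
          (Matrix.of fun i j => MvPolynomial.eval (0 : Fin d → k) (uP i j)) = 1 →
          (∀ t : Fin d → k, IsNilpotent
            ((Matrix.of fun i j => MvPolynomial.eval t (uP i j)) - 1)) →
          (∀ t t' : Fin d → k, ∃ t'' : Fin d → k,
            (Matrix.of fun i j => MvPolynomial.eval t (uP i j)) *
              (Matrix.of fun i j => MvPolynomial.eval t' (uP i j)) =
            (Matrix.of fun i j => MvPolynomial.eval t'' (uP i j))) →
          (∀ t : Fin d → k, ∃ t' : Fin d → k,
            (Matrix.of fun i j => MvPolynomial.eval t (uP i j)) *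
              (Matrix.of fun i j => MvPolynomial.eval t' (uP i j)) = 1) →
          ∀ a : Fin m → k, a ∉ 𝒬₀ →
          ∀ r : ℝ, 0 < r →
            lam {t ∈ Metric.ball 0 r |
                (Matrix.of fun i j => MvPolynomial.eval t (uP i j)).mulVec a ∈ 𝒬} ≤
              ENNReal.ofReal ε *
                lam {t ∈ Metric.ball 0 r |
                  (Matrix.of fun i j => MvPolynomial.eval t (uP i j)).mulVec a ∈ 𝒬₀} := by
  classical
  have : ProperSpace k := ProperSpace.of_locallyCompactSpace k
  have hε' : ENNReal.ofReal ε ≠ 0 := (ENNReal.ofReal_pos.2 hε).ne'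
  obtain ⟨ϖ, hϖ0, hϖ1⟩ := NormedField.exists_norm_lt_one k
  rw [norm_pos_iff] at hϖ0
  have hgood (N : ℕ) := exists_measure_norm_eval_lt_closedBall lam N hε' hϖ0
  choose η hη0 hη1 hη using hgood
  have hMclosed : IsClosed M := by
    rw [hM, Set.ofPred_forall]
    refine isClosed_iInter fun p => ?_
    rw [Set.ofPred_forall]
    exact isClosed_iInter fun _ =>
      isClosed_singleton.preimage (MvPolynomial.continuous_eval p)
  obtain ⟨R, hR, hAR⟩ := hAc.isBounded.subset_ball_lt 0 0
  set R' := R / η D with hR'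
  have hRR' : R ≤ R' := le_div_self hR.le (hη0 D) (hη1 D)
  have hR'pos : 0 < R' := hR.trans_le hRR'
  have hRη : η D * R' = R := mul_div_cancel₀ R (hη0 D).ne'
  refine ⟨M ∩ Metric.closedBall 0 R', Set.inter_subset_left,
    (isCompact_closedBall 0 R').inter_left hMclosed, fun 𝒬₀ h𝒬₀ hB => ?_⟩
  -- Finitely many equations of `M` are bounded below on the compact set `closedBall 0 R' \ 𝒬₀`.
  obtain ⟨F, hF⟩ := ((isCompact_closedBall (0 : Fin m → k) R').diff h𝒬₀).elim_finite_subcover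
    (fun i : S × ℕ => {x | 1 / ((i.2 : ℝ) + 1) < ‖eval x (i.1 : MvPolynomial (Fin m) k)‖})
    (fun i => isOpen_lt continuous_const (MvPolynomial.continuous_eval _).norm) (by
      intro x hx
      have hxM : x ∉ M := fun h => hx.2 (hB ⟨h, hx.1⟩)
      rw [hM] at hxM
      simp only [Set.mem_ofPred_eq, not_forall] at hxM
      obtain ⟨p, hp, hpx⟩ := hxM
      obtain ⟨n, hn⟩ := exists_nat_one_div_lt (norm_pos_iff.2 hpx)
      exact Set.mem_iUnion.2 ⟨⟨⟨p, hp⟩, n⟩, hn⟩)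
  let δ : S × ℕ → ℝ := fun i =>
    η ((i.1 : MvPolynomial (Fin m) k).totalDegree * D) * (1 / ((i.2 : ℝ) + 1))
  have hδ (i : S × ℕ) : 0 < δ i := mul_pos (hη0 _) Nat.one_div_pos_of_nat
  refine ⟨(𝒬₀ ∩ Metric.ball 0 R) ∩
    ⋂ i ∈ F, {x | ‖eval x (i.1 : MvPolynomial (Fin m) k)‖ < δ i},
    (h𝒬₀.inter Metric.isOpen_ball).inter (isOpen_biInter_finset fun i _ =>
      isOpen_lt (MvPolynomial.continuous_eval _).norm continuous_const), ?_, ?_⟩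
  · intro x hx
    have hxM := hA hx
    refine ⟨⟨hB ⟨hxM, ?_⟩, hAR hx⟩, Set.mem_iInter₂.2 fun i _ => ?_⟩
    · exact Metric.ball_subset_closedBall (Metric.ball_subset_ball hRR' (hAR hx))
    · rw [hM] at hxM
      change ‖eval x (i.1 : MvPolynomial (Fin m) k)‖ < δ i
      rw [hxM _ i.1.2, norm_zero]
      exact hδ i
  intro uP hdeg h1 _ _ _ a ha r hr
  let g : Fin m → MvPolynomial (Fin d) k := fun i => ∑ j, uP i j * C (a j)
  have hgdeg (i : Fin m) : (g i).totalDegree ≤ D :=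
    totalDegree_finsetSum_le fun j _ => (totalDegree_mul _ _).trans (by simpa using hdeg i j)
  have hg (t : Fin d → k) :
      (Matrix.of fun i j => MvPolynomial.eval t (uP i j)).mulVec a = fun i => eval t (g i) := by
    ext i
    simp [g, Matrix.mulVec, dotProduct]
  have hg0 : (fun i => eval 0 (g i)) = a := by rw [← hg, h1, Matrix.one_mulVec]
  simp only [hg]
  refine (measure_polynomial_preimage_le lam (G := 𝒬₀ ∩ Metric.ball 0 R')
    (ε := ENNReal.ofReal ε) ?_ (h𝒬₀.inter Metric.isOpen_ball) (fun h => ha (hg0 ▸ h.1)) hϖ0 hϖ1 ?_ hr).trans ?_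
  · exact fun x hx => ⟨hx.1.1, Metric.ball_subset_ball hRR' hx.1.2⟩
  · intro x hx
    by_cases hxR : ‖x‖ < R'
    · have hxF := hF ⟨(mem_closedBall_zero_iff.2 hxR.le), fun h =>
        hx ⟨h, mem_ball_zero_iff.2 hxR⟩⟩
      obtain ⟨i, hiF, hi⟩ := Set.mem_iUnion₂.1 hxF
      refine ⟨i.1, η ((i.1 : MvPolynomial (Fin m) k).totalDegree * D), fun y hy => ?_,
        hη _ _ (totalDegree_aeval_le g hgdeg _)⟩
      have hyi : ‖eval y (i.1 : MvPolynomial (Fin m) k)‖ < δ i := Set.mem_iInter₂.1 hy.2 i hiF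
      exact hyi.trans (mul_lt_mul_of_pos_left hi (hη0 _))
    · obtain ⟨j, hj⟩ : ∃ j, R' ≤ ‖x j‖ := by
        by_contra! h
        exact hxR ((pi_norm_lt_iff hR'pos).2 h)
      refine ⟨X j, η D, fun y hy => ?_, hη D _ (by simpa using hgdeg j)⟩
      rw [eval_X, eval_X]
      calc ‖y j‖ ≤ ‖y‖ := norm_le_pi_norm y j
        _ < R := mem_ball_zero_iff.1 hy.1.2
        _ = η D * R' := hRη.symm
        _ ≤ η D * ‖x j‖ := mul_le_mul_of_nonneg_left hj (hη0 D).le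
  · exact mul_le_mul' le_rfl (measure_mono fun t ht => ⟨ht.1, ht.2.1⟩)
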